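/- Let n ≥ 1 and let G be a finite subgroup of GL(n, ℂ). Then for each i ∈ {1,…,n} there exist an integer N ≥ 1 and G-invariant polynomials a₁,…,a_N ∈ ℂ[u₁,…,uₙ], where for each j the polynomial a_j is either zero or homogeneous of degree j and has zero constant coefficient, such that uᵢ^N + Σ_{j=1}^N a_j · uᵢ^{N−j} = 0 in ℂ[u₁,…,uₙ]. -/

import Mathlib

open MvPolynomial

/-- The action of `g ∈ GL(n, ℂ)` on polynomials by linear substitution:
`(g • P)(v) = P(g⁻¹ · v)`. -/
noncomputable def glAct {n : ℕ} (g : GL (Fin n) ℂ) :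
    MvPolynomial (Fin n) ℂ →ₐ[ℂ] MvPolynomial (Fin n) ℂ :=
  aeval fun i => ∑ j, C ((↑(g⁻¹) : Matrix (Fin n) (Fin n) ℂ) i j) * X j

/-!
If a finite group `G` acts on a graded commutative ring `A` and `x ∈ A` has its whole orbit in
degree `d`, then `∏_{g ∈ G} (T - g • x)` is monic in `T`, vanishes at `T = x` because of the factor
`g = 1`, and has `G`-invariant coefficients because `G` permutes its factors. By Vieta the
coefficient of `T ^ (|G| - k)` is, up to sign, the `k`-th elementary symmetric function of the
orbit, hence of degree `k • d`.
-/

theorem eval_eq_pow_add_sum_fin_of_monic {R : Type*} [Semiring R] {p : Polynomial R}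
    (hp : p.Monic) (x : R) :
    p.eval x = x ^ p.natDegree + ∑ j : Fin p.natDegree,
      p.coeff (p.natDegree - (j + 1)) * x ^ (p.natDegree - (j + 1)) := by
  rw [Polynomial.eval_eq_sum_range, Finset.sum_range_succ, hp.coeff_natDegree, one_mul, add_comm,
    ← Finset.sum_range_reflect, ← Fin.sum_univ_eq_sum_range
      (fun j => p.coeff (p.natDegree - 1 - j) * x ^ (p.natDegree - 1 - j))]
  simp only [Nat.sub_sub, add_comm 1]

section Graded

variable {A ι S : Type*} [CommRing A] [AddCommMonoid ι] [SetLike S A] [AddSubgroupClass S A]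
  (𝒜 : ι → S) [SetLike.GradedMonoid 𝒜] {d : ι}

theorem esymm_map_val_mem_graded {κ : Type*} {s : Finset κ} {f : κ → A}
    (hf : ∀ i ∈ s, f i ∈ 𝒜 d) (k : ℕ) : (s.val.map f).esymm k ∈ 𝒜 (k • d) := by
  rw [Finset.esymm_map_val]
  refine sum_mem fun t ht => ?_
  obtain ⟨hts, rfl⟩ := Finset.mem_powersetCard.mp ht
  simpa only [Finset.sum_const] using
    SetLike.prod_mem_graded 𝒜 (fun _ => d) f fun i hi => hf i (hts hi)

theorem coeff_prod_X_sub_C_mem_graded {κ : Type*} {s : Finset κ} {f : κ → A}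
    (hf : ∀ i ∈ s, f i ∈ 𝒜 d) {k : ℕ} (hk : k ≤ s.card) :
    (∏ i ∈ s, (Polynomial.X - Polynomial.C (f i))).coeff (s.card - k) ∈ 𝒜 (k • d) := by
  have vieta : (∏ i ∈ s, (Polynomial.X - Polynomial.C (f i))).coeff (s.card - k) =
      (-1) ^ k * (s.val.map f).esymm k := by
    simpa [Nat.sub_sub_self hk] using
      Multiset.prod_X_sub_C_coeff (s.val.map f) (k := s.card - k) (by simp)
  rw [vieta]
  rcases neg_one_pow_eq_or A k with hsign | hsign <;> rw [hsign]
  · simpa only [one_mul] using esymm_map_val_mem_graded 𝒜 hf k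
  · simpa only [neg_one_mul] using neg_mem (esymm_map_val_mem_graded 𝒜 hf k)

theorem stmt7_general (G : Type*) [Group G] [Finite G] [MulSemiringAction G A] {x : A}
    (hx : ∀ g : G, g • x ∈ 𝒜 d) :
    ∃ N : ℕ, 1 ≤ N ∧ ∃ a : Fin N → A,
      (∀ j : Fin N, (∀ g : G, g • a j = a j) ∧ a j ∈ 𝒜 (((j : ℕ) + 1) • d)) ∧
      x ^ N + ∑ j : Fin N, a j * x ^ (N - ((j : ℕ) + 1)) = 0 := by
  rcases subsingleton_or_nontrivial A
  · exact ⟨1, le_rfl, 0, fun _ => ⟨fun _ => smul_zero _, zero_mem _⟩, Subsingleton.elim _ _⟩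
  cases nonempty_fintype G
  let p := MulSemiringAction.charpoly G x
  have natDegree_p : p.natDegree = Fintype.card G :=
    Polynomial.natDegree_finsetProd_X_sub_C_eq_card _ _
  have coeff_mem : ∀ k ≤ p.natDegree, p.coeff (p.natDegree - k) ∈ 𝒜 (k • d) := by
    rw [natDegree_p]
    exact fun k hk => coeff_prod_X_sub_C_mem_graded 𝒜 (fun g _ => hx g) hk
  refine ⟨p.natDegree, natDegree_p ▸ Fintype.card_pos, fun j => p.coeff (p.natDegree - (j + 1)),
    fun j => ⟨MulSemiringAction.smul_coeff_charpoly x _, coeff_mem _ j.isLt⟩, ?_⟩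
  rw [← eval_eq_pow_add_sum_fin_of_monic (MulSemiringAction.monic_charpoly G x)]
  exact MulSemiringAction.eval_charpoly G x

end Graded

section LinearSubstitution

variable {n : ℕ}

theorem glAct_one : glAct (1 : GL (Fin n) ℂ) = AlgHom.id ℂ _ := by
  ext1 i
  simp [glAct, Matrix.one_apply]

theorem glAct_mul (g h : GL (Fin n) ℂ) : glAct (g * h) = (glAct g).comp (glAct h) := by
  ext1 i
  simp only [glAct, AlgHom.comp_apply, aeval_X, map_sum, map_mul, algHom_C, algebraMap_eq,
    mul_inv_rev, Units.val_mul, Matrix.mul_apply, Finset.sum_mul, Finset.mul_sum, mul_assoc]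
  exact Finset.sum_comm

theorem isHomogeneous_glAct_X (g : GL (Fin n) ℂ) (i : Fin n) :
    (glAct g (X i)).IsHomogeneous 1 := by
  rw [glAct, aeval_X]
  exact IsHomogeneous.sum _ _ _ fun j _ => isHomogeneous_C_mul_X _ _

/-- Linear substitution `glAct` as an action of `GL(n, ℂ)` on `ℂ[u₁, …, uₙ]` by ring
automorphisms, so that subgroups act by restriction; `g • P` unfolds to `glAct g P`. -/
noncomputable instance glMulSemiringAction :
    MulSemiringAction (GL (Fin n) ℂ) (MvPolynomial (Fin n) ℂ) where
  smul g := glAct g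
  one_smul := DFunLike.congr_fun glAct_one
  mul_smul g h := DFunLike.congr_fun (glAct_mul g h)
  smul_zero g := map_zero (glAct g)
  smul_add g := map_add (glAct g)
  smul_one g := map_one (glAct g)
  smul_mul g := map_mul (glAct g)

end LinearSubstitution

theorem stmt7 (n : ℕ) (hn : 1 ≤ n)
    (G : Subgroup (GL (Fin n) ℂ)) (hGfin : (G : Set (GL (Fin n) ℂ)).Finite)
    (i : Fin n) :
    ∃ N : ℕ, 1 ≤ N ∧ ∃ a : Fin N → MvPolynomial (Fin n) ℂ,
      (∀ j : Fin N,
        (∀ g ∈ G, glAct g (a j) = a j) ∧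
        (a j = 0 ∨ (a j).IsHomogeneous ((j : ℕ) + 1)) ∧
        coeff 0 (a j) = 0) ∧
      X i ^ N + ∑ j : Fin N, a j * X i ^ (N - ((j : ℕ) + 1)) = 0 := by
  have : Finite G := hGfin
  obtain ⟨N, hN, a, ha, hroot⟩ := stmt7_general (homogeneousSubmodule (Fin n) ℂ) G
    fun g => isHomogeneous_glAct_X (g : GL (Fin n) ℂ) i
  have hom (j : Fin N) : (a j).IsHomogeneous ((j : ℕ) + 1) := by
    simpa only [smul_eq_mul, mul_one, mem_homogeneousSubmodule] using (ha j).2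
  exact ⟨N, hN, a, fun j => ⟨fun g hg => (ha j).1 ⟨g, hg⟩, .inr (hom j),
    (hom j).coeff_eq_zero (by simp)⟩, hroot⟩
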